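/- Let S be a subset of ℝ[x₁,…,x_n] containing r² = Σxᵢ², and let B be the subalgebra generated by S. If for all f, g ∈ S both Δf ∈ B and ⟨∇f, ∇g⟩ ∈ B, then B is a Laplacian algebra, i.e., Δ(B) ⊆ B. Conversely, if B is Laplacian then Δf, ⟨∇f,∇g⟩ ∈ B for all f,g ∈ S. -/

import Mathlib

open MvPolynomial

/-- The Laplacian Δ = Σᵢ ∂²/∂xᵢ². -/
noncomputable def lap {n : ℕ} (f : MvPolynomial (Fin n) ℝ) : MvPolynomial (Fin n) ℝ :=
  ∑ i, pderiv i (pderiv i f)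

/-- ⟨∇f, ∇g⟩ = Σᵢ (∂f/∂xᵢ)(∂g/∂xᵢ). -/
noncomputable def gradInner {n : ℕ} (f g : MvPolynomial (Fin n) ℝ) :
    MvPolynomial (Fin n) ℝ :=
  ∑ i, pderiv i f * pderiv i g

/-- r² = x₁² + ⋯ + xₙ². -/
noncomputable def rsq {n : ℕ} : MvPolynomial (Fin n) ℝ := ∑ i, X i ^ 2

/-!
The identity `Δ(sf) = s Δf + f Δs + 2⟨∇s, ∇f⟩` is all that matters about `Δ`. Every element of `B`
is a linear combination of products of generators, and by induction such products can be built by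
multiplying by one generator `s ∈ S` at a time; the identity then involves the gradient product
only through the derivation `⟨∇s, ·⟩`, which preserves `B` because it maps `S` into `B`.
Conversely, the identity expresses `⟨∇f, ∇g⟩` through `Δ(fg)`, `Δf` and `Δg`.
-/

theorem derivation_apply_mem_of_mem_adjoin {R A : Type*} [CommSemiring R] [CommSemiring A]
    [Algebra R A] {S : Set A} {B : Subalgebra R A} (D : Derivation R A A) (hSB : S ⊆ B)
    (hD : ∀ s ∈ S, D s ∈ B) {f : A} (hf : f ∈ Algebra.adjoin R S) : D f ∈ B := by
  have adjoin_le : Algebra.adjoin R S ≤ B := Algebra.adjoin_le hSB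
  induction hf using Algebra.adjoin_induction with
  | mem s hs => exact hD s hs
  | algebraMap c => simpa only [D.map_algebraMap] using zero_mem B
  | add f g _ _ hDf hDg => simpa only [map_add] using add_mem hDf hDg
  | mul f g hf hg hDf hDg =>
    simpa only [D.leibniz, smul_eq_mul] using
      add_mem (mul_mem (adjoin_le hf) hDg) (mul_mem (adjoin_le hg) hDf)

section CarreDuChamp

variable {R A : Type*} [CommRing R] [CommRing A] [Algebra R A]

/-- `Γ` is a carré du champ of the operator `L`: twice `Γ` measures the failure of `L` to be a
derivation, the Laplacian with `⟨∇f, ∇g⟩` being the model case. Each `Γ f` is bundled as a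
derivation; `Γ` itself is a plain function of `f`. -/
def IsCarreDuChamp (L : A →ₗ[R] A) (Γ : A → Derivation R A A) : Prop :=
  ∀ f g, L (f * g) = f * L g + g * L f + 2 * Γ f g

namespace IsCarreDuChamp

variable {L : A →ₗ[R] A} {Γ : A → Derivation R A A}

theorem map_one_eq_zero (hΓ : IsCarreDuChamp L Γ) : L 1 = 0 := by
  simpa using hΓ 1 1

theorem apply_eq_invOf_two_smul [Invertible (2 : R)] (hΓ : IsCarreDuChamp L Γ) (f g : A) :
    Γ f g = ⅟(2 : R) • (L (f * g) - f * L g - g * L f) := by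
  have two_smul_apply : (2 : R) • Γ f g = L (f * g) - f * L g - g * L f := by
    rw [hΓ f g, two_smul]
    ring
  rw [← two_smul_apply, invOf_smul_smul]

theorem apply_mem [Invertible (2 : R)] (hΓ : IsCarreDuChamp L Γ) {B : Subalgebra R A}
    (hL : ∀ f ∈ B, L f ∈ B) {f g : A} (hf : f ∈ B) (hg : g ∈ B) : Γ f g ∈ B := by
  rw [hΓ.apply_eq_invOf_two_smul]
  exact B.smul_mem (sub_mem (sub_mem (hL _ (mul_mem hf hg)) (mul_mem hf (hL g hg)))
    (mul_mem hg (hL f hf))) _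

theorem map_mem_adjoin (hΓ : IsCarreDuChamp L Γ) {S : Set A}
    (hL : ∀ s ∈ S, L s ∈ Algebra.adjoin R S)
    (hΓS : ∀ s ∈ S, ∀ t ∈ S, Γ s t ∈ Algebra.adjoin R S) {f : A}
    (hf : f ∈ Algebra.adjoin R S) : L f ∈ Algebra.adjoin R S := by
  set B := Algebra.adjoin R S
  have hSB : S ⊆ B := Algebra.subset_adjoin
  have map_mul_mem {s f : A} (hs : s ∈ S) (hf : f ∈ B) (hLf : L f ∈ B) : L (s * f) ∈ B := by
    have hΓsf : Γ s f ∈ B := derivation_apply_mem_of_mem_adjoin (Γ s) hSB (hΓS s hs) hf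
    rw [hΓ s f]
    exact add_mem (add_mem (mul_mem (hSB hs) hLf) (mul_mem hf (hL s hs)))
      (mul_mem (ofNat_mem B 2) hΓsf)
  have closure_le : Submonoid.closure S ≤ B.toSubmonoid := Submonoid.closure_le.mpr hSB
  suffices h : B.toSubmodule ≤ B.toSubmodule.comap L from h hf
  rw [Algebra.adjoin_eq_span, Submodule.span_le, ← Algebra.adjoin_eq_span]
  intro m hm
  induction hm using Submonoid.closure_induction_left with
  | one => simp [hΓ.map_one_eq_zero]
  | mul_left s hs m hm hLm => exact map_mul_mem hs (closure_le hm) hLm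

end IsCarreDuChamp

theorem laplacian_iff_generators_general [Invertible (2 : R)] {L : A →ₗ[R] A}
    {Γ : A → Derivation R A A} (hΓ : IsCarreDuChamp L Γ) (S : Set A) :
    (∀ f ∈ S, ∀ g ∈ S, L f ∈ Algebra.adjoin R S ∧ Γ f g ∈ Algebra.adjoin R S) ↔
      (∀ f ∈ Algebra.adjoin R S, L f ∈ Algebra.adjoin R S) := by
  constructor
  · intro hS f hf
    exact hΓ.map_mem_adjoin (fun s hs => (hS s hs s hs).1) (fun s hs t ht => (hS s hs t ht).2) hf
  · intro hL f hf g hg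
    have hSB : S ⊆ Algebra.adjoin R S := Algebra.subset_adjoin
    exact ⟨hL f (hSB hf), hΓ.apply_mem hL (hSB hf) (hSB hg)⟩

end CarreDuChamp

section Laplacian

variable {n : ℕ}

/-- The Laplacian `lap` as a linear map. -/
noncomputable def lapLinearMap : MvPolynomial (Fin n) ℝ →ₗ[ℝ] MvPolynomial (Fin n) ℝ :=
  ∑ i, (pderiv i).toLinearMap ∘ₗ (pderiv i).toLinearMap

theorem lapLinearMap_apply (f : MvPolynomial (Fin n) ℝ) : lapLinearMap f = lap f := by
  simp [lapLinearMap, lap]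

/-- The derivation `⟨∇f, ∇·⟩`, that is, differentiation along the vector field `∇f`. -/
noncomputable def gradInnerDerivation (f : MvPolynomial (Fin n) ℝ) :
    Derivation ℝ (MvPolynomial (Fin n) ℝ) (MvPolynomial (Fin n) ℝ) :=
  ∑ i, pderiv i f • pderiv i

theorem gradInnerDerivation_apply (f g : MvPolynomial (Fin n) ℝ) :
    gradInnerDerivation f g = gradInner f g := by
  simp only [gradInnerDerivation, gradInner, ← Derivation.coeFnAddMonoidHom_apply, map_sum,
    Finset.sum_apply]
  rfl

theorem lap_mul (f g : MvPolynomial (Fin n) ℝ) :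
    lap (f * g) = f * lap g + g * lap f + 2 * gradInner f g := by
  simp only [lap, gradInner, Finset.mul_sum, ← Finset.sum_add_distrib, pderiv_mul, map_add]
  exact Finset.sum_congr rfl fun i _ => by ring

theorem isCarreDuChamp_gradInnerDerivation :
    IsCarreDuChamp (lapLinearMap (n := n)) gradInnerDerivation := fun f g => by
  simp only [lapLinearMap_apply, gradInnerDerivation_apply, lap_mul]

end Laplacian

/-- The subalgebra B generated by a set S containing r² is Laplacian iff
Δf ∈ B and ⟨∇f,∇g⟩ ∈ B for all f, g ∈ S. -/
theorem laplacian_iff_generators {n : ℕ} (S : Set (MvPolynomial (Fin n) ℝ))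
    (hrS : rsq ∈ S) :
    (∀ f ∈ S, ∀ g ∈ S, lap f ∈ Algebra.adjoin ℝ S ∧
        gradInner f g ∈ Algebra.adjoin ℝ S) ↔
      (∀ f ∈ Algebra.adjoin ℝ S, lap f ∈ Algebra.adjoin ℝ S) := by
  simpa only [lapLinearMap_apply, gradInnerDerivation_apply] using
    laplacian_iff_generators_general isCarreDuChamp_gradInnerDerivation S
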